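/- There exists a Turing machine with 44 states and 8 tape symbols which, started on the blank tape, halts, and the number of steps it performs before halting is greater than n(3). -/

import Mathlib

/-- `friedmanBlock s i` is the block `s_i s_{i+1} … s_{2i}` of the word `s`
(1-based indices); it has length `i + 1` when `2*i ≤ s.length`. -/
def friedmanBlock {α : Type} (s : List α) (i : ℕ) : List α :=
  (s.drop (i - 1)).take (i + 1)

/-- Friedman's property (*): there are no indices `1 ≤ i < j ≤ n/2` such that
`s^(i)` is a (scattered) subword of `s^(j)`.  Note `j ≤ n/2 ↔ 2*j ≤ n`. -/
def SatisfiesStar {α : Type} (s : List α) : Prop :=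
  ∀ i j : ℕ, 1 ≤ i → i < j → 2 * j ≤ s.length →
    ¬ (friedmanBlock s i).Sublist (friedmanBlock s j)

/-- `friedmanN k` = n(k), the length of a longest word over a `k`-letter
alphabet satisfying (*). -/
noncomputable def friedmanN (k : ℕ) : ℕ :=
  sSup {n : ℕ | ∃ s : List (Fin k), s.length = n ∧ SatisfiesStar s}

open Turing

/-- Iterated `TM0.step`: run the machine for `n` steps, returning `none` if it
halts strictly before that. -/
def multistep {Γ Λ : Type} [Inhabited Γ] [Inhabited Λ]
    (M : TM0.Machine Γ Λ) : ℕ → TM0.Cfg Γ Λ → Option (TM0.Cfg Γ Λ)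
  | 0, c => some c
  | n + 1, c => (TM0.step M c).bind (multistep M n)

/-- Started from configuration `c₀`, the machine reaches after exactly `T`
steps a configuration on which the transition function is undefined. -/
def HaltsFromIn {Γ Λ : Type} [Inhabited Γ] [Inhabited Λ]
    (M : TM0.Machine Γ Λ) (c₀ : TM0.Cfg Γ Λ) (T : ℕ) : Prop :=
  ∃ c, multistep M T c₀ = some c ∧ TM0.step M c = none

/-- The machine halts on the blank tape in exactly `T` steps. -/
def HaltsIn {Γ Λ : Type} [Inhabited Γ] [Inhabited Λ]
    (M : TM0.Machine Γ Λ) (T : ℕ) : Prop :=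
  HaltsFromIn M (TM0.init []) T

/-!
The machine searches depth first through stacks of words `w₁, w₂, …` in which no word is a subword
of a later one and each word is one letter longer than the one before it. An accepted word `w` is
followed by all words of length `|w| + 1` in descending lexicographic order. By Higman's lemma there
is no infinite stack of this kind, so the search is finite. If `s` satisfies (*), its blocks
`s^(1), s^(2), …` form such a stack, so the search passes through it; as each block costs at least
two steps, the running time exceeds the length of `s`.
-/

open StateTransition

theorem reaches_trans {σ : Type*} {f : σ → Option σ} {a b c : σ} (hab : Reaches f a b)
    (hbc : Reaches f b c) : Reaches f a c :=
  Relation.ReflTransGen.trans hab hbc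

theorem reaches_of_step {σ : Type*} {f : σ → Option σ} {a b c : σ} (hab : f a = some b)
    (hbc : Reaches f b c) : Reaches f a c :=
  .head hab hbc

section Halting

variable {Γ Λ Γ' Λ' : Type} [Inhabited Γ] [Inhabited Λ] [Inhabited Γ'] [Inhabited Λ']
variable {M : TM0.Machine Γ Λ} {c c' : TM0.Cfg Γ Λ} {T : ℕ}

theorem haltsFromIn_zero : HaltsFromIn M c 0 ↔ TM0.step M c = none := by
  simp [HaltsFromIn, multistep]

theorem haltsFromIn_succ :
    HaltsFromIn M c (T + 1) ↔ ∃ c', TM0.step M c = some c' ∧ HaltsFromIn M c' T := by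
  cases h : TM0.step M c <;> simp [HaltsFromIn, multistep, h]

theorem exists_haltsFromIn_of_reaches (h : Reaches (TM0.step M) c c')
    (hc' : TM0.step M c' = none) : ∃ T, HaltsFromIn M c T := by
  induction h using Relation.ReflTransGen.head_induction_on with
  | refl => exact ⟨0, haltsFromIn_zero.2 hc'⟩
  | head hstep _ ih =>
    obtain ⟨T, hT⟩ := ih
    exact ⟨T + 1, haltsFromIn_succ.2 ⟨_, hstep, hT⟩⟩

theorem HaltsFromIn.of_step (hT : HaltsFromIn M c T) (h : TM0.step M c = some c') :
    ∃ T' < T, HaltsFromIn M c' T' := by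
  cases T with
  | zero => simp [haltsFromIn_zero.1 hT] at h
  | succ T =>
    obtain ⟨c'', hc'', hT'⟩ := haltsFromIn_succ.1 hT
    obtain rfl : c'' = c' := Option.some.inj (hc''.symm.trans h)
    exact ⟨T, T.lt_succ_self, hT'⟩

theorem HaltsFromIn.of_reaches (hT : HaltsFromIn M c T) (h : Reaches (TM0.step M) c c') :
    ∃ T' ≤ T, HaltsFromIn M c' T' := by
  induction h with
  | refl => exact ⟨T, le_rfl, hT⟩
  | tail _ hstep ih =>
    obtain ⟨T₁, hle, hT₁⟩ := ih
    obtain ⟨T₂, hlt, hT₂⟩ := hT₁.of_step hstep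
    exact ⟨T₂, hlt.le.trans hle, hT₂⟩

theorem HaltsFromIn.of_reaches₁ (hT : HaltsFromIn M c T) (h : Reaches₁ (TM0.step M) c c') :
    ∃ T' < T, HaltsFromIn M c' T' := by
  obtain ⟨c₁, hstep, hreach⟩ := Relation.TransGen.head'_iff.1 h
  obtain ⟨T₁, hlt, hT₁⟩ := hT.of_step hstep
  obtain ⟨T₂, hle, hT₂⟩ := hT₁.of_reaches hreach
  exact ⟨T₂, hle.trans_lt hlt, hT₂⟩

theorem HaltsFromIn.map {f₁ : PointedMap Γ Γ'} {f₂ : PointedMap Γ' Γ} {g₁ : Λ → Λ'} {g₂ : Λ' → Λ}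
    (hf : Function.RightInverse f₁ f₂) (hg : Function.LeftInverse g₂ g₁)
    (hT : HaltsFromIn M c T) : HaltsFromIn (M.map f₁ f₂ g₁ g₂) (c.map f₁ g₁) T := by
  have hstep (c : TM0.Cfg Γ Λ) := M.map_step f₁ f₂ g₁ g₂ (S := Set.univ) hf (fun q _ => hg q) c
    (Set.mem_univ _)
  induction T generalizing c with
  | zero => rw [haltsFromIn_zero, ← hstep, haltsFromIn_zero.1 hT, Option.map_none]
  | succ T ih =>
    obtain ⟨c', hc', hT'⟩ := haltsFromIn_succ.1 hT
    exact haltsFromIn_succ.2 ⟨c'.map f₁ g₁, by rw [← hstep, hc', Option.map_some], ih hT'⟩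

theorem exists_pointedMap_rightInverse [Fintype Γ] [Fintype Γ']
    (h : Fintype.card Γ ≤ Fintype.card Γ') :
    ∃ (f : PointedMap Γ Γ') (g : PointedMap Γ' Γ), Function.RightInverse f g := by
  classical
  obtain ⟨e⟩ := Function.Embedding.nonempty_of_card_le h
  let f : Γ → Γ' := Equiv.swap (e default) default ∘ e
  have hf : Function.LeftInverse (Function.invFun f) f :=
    Function.leftInverse_invFun ((Equiv.injective _).comp e.injective)
  have hf_default : f default = default := Equiv.swap_apply_left _ _
  refine ⟨⟨f, hf_default⟩, ⟨Function.invFun f, ?_⟩, hf⟩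
  rw [← hf_default, hf]

theorem HaltsIn.exists_of_card_le [Fintype Γ] [Fintype Λ] [Fintype Γ'] [Fintype Λ']
    (hΓ : Fintype.card Γ ≤ Fintype.card Γ') (hΛ : Fintype.card Λ ≤ Fintype.card Λ')
    (hT : HaltsIn M T) : ∃ M' : TM0.Machine Γ' Λ', HaltsIn M' T := by
  obtain ⟨f₁, f₂, hf⟩ := exists_pointedMap_rightInverse hΓ
  obtain ⟨g₁, g₂, hg⟩ := exists_pointedMap_rightInverse hΛ
  refine ⟨M.map f₁ f₂ g₁ g₂, ?_⟩
  have := HaltsFromIn.map hf hg hT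
  rwa [TM0.map_init] at this

end Halting

section Configurations

variable {Γ Λ : Type*} [Inhabited Γ]

/-- The transition that moves the head one cell to the left and enters state `q`. -/
def goLeft (q : Λ) : Option (Λ × TM0.Stmt Γ) := some (q, .move .left)

/-- The transition that moves the head one cell to the right and enters state `q`. -/
def goRight (q : Λ) : Option (Λ × TM0.Stmt Γ) := some (q, .move .right)

/-- The transition that writes `a` without moving the head and enters state `q`. -/
def write (a : Γ) (q : Λ) : Option (Λ × TM0.Stmt Γ) := some (q, .write a)

/-- The configuration in state `q` whose head scans the first symbol of `l`, where `l` lists the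
tape from the head leftwards and `r` lists it rightwards from the cell after the head. All further
cells are blank; if `l = []`, the head scans a blank. -/
def leftCfg (q : Λ) (l r : List Γ) : TM0.Cfg Γ Λ :=
  ⟨q, Tape.mk' (ListBlank.mk l.tail) (ListBlank.mk (l.headI :: r))⟩

/-- The configuration in state `q` whose head scans the first symbol of `r`, where `r` lists the
tape from the head rightwards and `l` lists it leftwards from the cell before the head. -/
def rightCfg (q : Λ) (l r : List Γ) : TM0.Cfg Γ Λ :=
  ⟨q, Tape.mk' (ListBlank.mk l) (ListBlank.mk r)⟩

variable {q q' : Λ} {a b : Γ} {l l' r r' : List Γ}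

theorem listBlank_mk_default : (ListBlank.mk [default] : ListBlank Γ) = ListBlank.mk [] :=
  Quotient.sound (.inr ⟨1, rfl⟩)

theorem rightCfg_nil : rightCfg q l [] = leftCfg q (default :: l) [] := by
  simp only [rightCfg, leftCfg, List.tail_cons, List.headI, listBlank_mk_default]

variable [Inhabited Λ] {M : TM0.Machine Γ Λ}

theorem step_goLeft (h : M q a = goLeft q') :
    TM0.step M (leftCfg q (a :: l) r) = some (leftCfg q' l (a :: r)) := by
  simp [TM0.step, leftCfg, h, goLeft, Tape.move_left_mk', ListBlank.cons_mk]

theorem step_goRight (h : M q a = goRight q') :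
    TM0.step M (leftCfg q (a :: l) r) = some (rightCfg q' (a :: l) r) := by
  simp [TM0.step, leftCfg, rightCfg, h, goRight, Tape.move_right_mk', ListBlank.cons_mk]

theorem step_write (h : M q a = write b q') :
    TM0.step M (leftCfg q (a :: l) r) = some (leftCfg q' (b :: l) r) := by
  simp [TM0.step, leftCfg, h, write, Tape.write_mk', ListBlank.cons_mk]

theorem step_write_rightEnd (h : M q default = write b q') :
    TM0.step M (rightCfg q l []) = some (leftCfg q' (b :: l) []) := by
  rw [rightCfg_nil, step_write h]

theorem step_goLeft_of_default (h : M q default = goLeft q') :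
    TM0.step M (leftCfg q (default :: l) []) = some (leftCfg q' l []) := by
  have htrim : leftCfg q' l [default] = leftCfg q' l [] := by
    simp only [leftCfg, ← ListBlank.cons_mk l.headI, listBlank_mk_default]
  rw [step_goLeft h, htrim]

theorem step_goLeft_rightEnd (h : M q default = goLeft q') :
    TM0.step M (rightCfg q l []) = some (leftCfg q' l []) := by
  rw [rightCfg_nil, step_goLeft_of_default h]

theorem step_goRight_leftEnd (h : M q default = goRight q') :
    TM0.step M (leftCfg q [] r) = some (rightCfg q' [] r) := by
  have hblank : leftCfg q [] r = leftCfg q [default] r := rfl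
  rw [hblank, step_goRight h, rightCfg, listBlank_mk_default, rightCfg]

theorem step_leftEnd_eq_none (h : M q default = none) : TM0.step M (leftCfg q [] r) = none := by
  simp [TM0.step, leftCfg, List.headI, h]

theorem reaches_sweepLeft (h : ∀ a ∈ l, M q a = goLeft q) :
    Reaches (TM0.step M) (leftCfg q (l ++ l') r) (leftCfg q l' (l.reverse ++ r)) := by
  induction l generalizing r with
  | nil => exact .refl
  | cons a l ih =>
    rw [List.reverse_cons, List.append_assoc, List.singleton_append]
    exact .head (step_goLeft (h a List.mem_cons_self)) (ih fun b hb => h b (.tail a hb))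

theorem reaches_sweepRight (h : ∀ a ∈ r, M q a = goRight q) :
    Reaches (TM0.step M) (rightCfg q l (r ++ r')) (rightCfg q (r.reverse ++ l) r') := by
  induction r generalizing l with
  | nil => exact .refl
  | cons a r ih =>
    rw [List.reverse_cons, List.append_assoc, List.singleton_append]
    exact .head (step_goRight (h a List.mem_cons_self)) (ih fun b hb => h b (.tail a hb))

end Configurations

section Higman

variable {α : Type*} [Finite α]

theorem exists_lt_sublist_of_finite (f : ℕ → List α) : ∃ m n, m < n ∧ (f m).Sublist (f n) := by
  have hα : (Set.univ : Set α).PartiallyWellOrderedOn (· = ·) :=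
    Set.partiallyWellOrderedOn_univ_iff.2 (Finite.wellQuasiOrdered _)
  have hlist := Set.PartiallyWellOrderedOn.partiallyWellOrderedOn_sublistForall₂ (· = ·) hα
  obtain ⟨m, n, hmn, hsub⟩ := hlist.exists_lt (f := f) (by simp)
  refine ⟨m, n, hmn, ?_⟩
  simpa [List.sublistForall₂_iff, List.forall₂_eq_eq_eq] using hsub

/-- `t` extends the stack `s` by a word that has no word of `s` as a subword. -/
def IsBadExtension (t s : List (List α)) : Prop := ∃ w, t = w :: s ∧ ∀ x ∈ s, ¬ x.Sublist w

theorem wellFounded_isBadExtension : WellFounded (IsBadExtension (α := α)) := by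
  rw [wellFounded_iff_isEmpty_descending_chain]
  refine ⟨fun ⟨stack, hstack⟩ => ?_⟩
  choose w hw hbad using hstack
  have hmem (m n : ℕ) (hmn : m < n) : w m ∈ stack n := by
    induction n, hmn using Nat.le_induction with
    | base => simp [hw m]
    | succ n _ ih => simp [hw n, ih]
  obtain ⟨m, n, hmn, hsub⟩ := exists_lt_sublist_of_finite w
  exact hbad n (w m) (hmem m n hmn) hsub

end Higman

section Blocks

variable {α : Type} {s x : List α} {j : ℕ}

/-- The blocks `s^(1), …, s^(j)` of Friedman's property, as a stack with `s^(j)` on top. -/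
def blockStack (s : List α) (j : ℕ) : List (List α) :=
  ((List.range j).map fun i => friedmanBlock s (i + 1)).reverse

theorem blockStack_succ (s : List α) (j : ℕ) :
    blockStack s (j + 1) = friedmanBlock s (j + 1) :: blockStack s j := by
  simp [blockStack, List.range_succ]

theorem length_friedmanBlock_succ (hj : 2 * (j + 1) ≤ s.length) :
    (friedmanBlock s (j + 1)).length = j + 2 := by
  simp only [friedmanBlock, List.length_take, List.length_drop]
  omega

theorem SatisfiesStar.not_sublist_of_mem_blockStack (hs : SatisfiesStar s)
    (hj : 2 * (j + 1) ≤ s.length) (hx : x ∈ blockStack s j) :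
    ¬ x.Sublist (friedmanBlock s (j + 1)) := by
  obtain ⟨i, hi, rfl⟩ : ∃ i < j, friedmanBlock s (i + 1) = x := by simpa [blockStack] using hx
  exact hs (i + 1) (j + 1) (by omega) (by omega) hj

end Blocks

section Digits

variable {k : ℕ} {u v w : List (Fin (k + 1))}

theorem ofDigits_injective_of_length_eq (hlength : u.length = v.length)
    (h : Nat.ofDigits (k + 1) (u.map Fin.val) = Nat.ofDigits (k + 1) (v.map Fin.val)) : u = v := by
  induction u generalizing v with
  | nil => exact (List.length_eq_zero_iff.1 hlength.symm).symm
  | cons d u ih =>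
    obtain _ | ⟨e, v⟩ := v
    · simp at hlength
    simp only [List.map_cons, Nat.ofDigits_cons] at h
    have hhead : d = e := by
      have hmod := congrArg (· % (k + 1)) h
      simpa [Nat.mod_eq_of_lt d.isLt, Nat.mod_eq_of_lt e.isLt, Fin.val_inj] using hmod
    subst hhead
    rw [ih (Nat.succ.inj hlength) (Nat.mul_left_cancel k.succ_pos (Nat.add_left_cancel h))]

theorem ofDigits_le_ofDigits_replicate_last : Nat.ofDigits (k + 1) (v.map Fin.val) ≤
    Nat.ofDigits (k + 1) ((List.replicate v.length (Fin.last k)).map Fin.val) := by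
  induction v with
  | nil => rfl
  | cons d v ih =>
    simp only [List.map_cons, List.length_cons, List.replicate_succ, Nat.ofDigits_cons]
    exact Nat.add_le_add (Fin.le_last d) (Nat.mul_le_mul_left _ ih)

/-- The rank of a word among the words of the same length, its last letter being the least
significant digit. -/
def wordRank (w : List (Fin (k + 1))) : ℕ := Nat.ofDigits (k + 1) (w.reverse.map Fin.val)

theorem wordRank_injective_of_length_eq (hlength : v.length = w.length)
    (hrank : wordRank v = wordRank w) : v = w :=
  List.reverse_injective (ofDigits_injective_of_length_eq (by simpa using hlength) hrank)

theorem wordRank_le_wordRank_replicate_last :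
    wordRank w ≤ wordRank (List.replicate w.length (Fin.last k)) := by
  simpa [wordRank] using ofDigits_le_ofDigits_replicate_last (v := w.reverse)

end Digits

namespace FriedmanSearch

variable {k : ℕ}

/-- Tape symbols of the search machine over the alphabet `Fin (k + 1)`. A marked letter is one that
the subword test has already matched; `sep` precedes every word on the tape. -/
inductive TapeSymbol (k : ℕ)
  | blank
  | letter (d : Fin (k + 1))
  | marked (d : Fin (k + 1))
  | sep
  deriving Fintype

instance : Inhabited (TapeSymbol k) := ⟨.blank⟩

theorem card_tapeSymbol : Fintype.card (TapeSymbol k) = 2 * (k + 1) + 2 := by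
  rw [← Fintype.card_congr (proxy_equiv% (TapeSymbol k))]
  simp only [Fintype.card_sum, Fintype.card_unique, Fintype.card_fin]
  ring

/-- States of the search machine. `restore true` leads to a subword test and `restore false` follows
a failed one; the argument of `skip` and `seek` is the letter currently being matched, with `none`
in the last sweep, which only looks for completely matched words. -/
inductive State (k : ℕ)
  | init
  | firstLetter
  | secondLetter
  | restore (b : Bool)
  | addTick
  | passTicks
  | fetch
  | skip (o : Option (Fin (k + 1)))
  | seek (o : Option (Fin (k + 1)))
  | rewind
  | erase
  | popped
  | findSep
  | decrement
  | carry
  deriving Fintype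

instance : Inhabited (State k) := ⟨.init⟩

theorem card_state : Fintype.card (State k) = 2 * (k + 1) + 16 := by
  rw [← Fintype.card_congr (proxy_equiv% (State k))]
  simp only [Fintype.card_sum, Fintype.card_unique, Fintype.card_bool, Fintype.card_option,
    Fintype.card_fin]
  ring

open TapeSymbol State

/-- The search machine. The tape holds a stack of words, topmost on the right, each preceded by
`sep` and written with its first letter rightmost. Letter by letter, the machine matches the top
word greedily against all words below it, and each round appends the letter `Fin.last k` as a tick
beyond a new `sep`. If no word below is a subword of the top word, the ticks are the next word to
test; otherwise they are erased and the top word is replaced by its predecessor, or popped if it has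
none. The machine halts when the stack is empty. -/
def machine : TM0.Machine (TapeSymbol k) (State k)
  | .init, blank => write sep firstLetter
  | firstLetter, sep => goRight firstLetter
  | firstLetter, blank => write (letter (Fin.last k)) secondLetter
  | secondLetter, letter _ => goRight secondLetter
  | secondLetter, blank => write (letter (Fin.last k)) (restore true)
  | restore b, letter _ => goRight (restore b)
  | restore b, marked d => write (letter d) (restore b)
  | restore b, sep => goRight (restore b)
  | restore true, blank => write sep addTick
  | restore false, blank => goLeft erase
  | addTick, blank => write (letter (Fin.last k)) passTicks
  | addTick, _ => goRight addTick
  | passTicks, letter _ => goLeft passTicks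
  | passTicks, sep => goLeft fetch
  | fetch, marked _ => goLeft fetch
  | fetch, letter d => write (marked d) (skip (some d))
  | fetch, sep => goLeft (seek none)
  | skip o, letter _ => goLeft (skip o)
  | skip o, marked _ => goLeft (skip o)
  | skip o, sep => goLeft (seek o)
  | seek o, marked _ => goLeft (seek o)
  | seek o, letter d => if o = some d then write (marked d) (skip o) else goLeft (skip o)
  | seek _, sep => goLeft rewind
  | seek none, blank => goRight (restore true)
  | seek (some _), blank => goRight addTick
  | rewind, blank => goRight (restore false)
  | rewind, _ => goLeft rewind
  | erase, letter _ => write blank erase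
  | erase, blank => goLeft erase
  | erase, sep => write blank popped
  | popped, blank => goLeft findSep
  | findSep, letter _ => goLeft findSep
  | findSep, sep => goRight decrement
  | decrement, letter d =>
    if d = 0 then write (letter (Fin.last k)) carry else write (letter (d - 1)) (restore true)
  | decrement, blank => goLeft erase
  | carry, letter _ => goRight decrement
  | _, _ => none

local notation:50 c "⟶*" c' => Reaches (TM0.step machine) c c'
local notation:50 c "⟶⁺" c' => Reaches₁ (TM0.step machine) c c'

variable {o : Option (Fin (k + 1))} {v w : List (Fin (k + 1))} {s : List (List (Fin (k + 1)))}
variable {l r : List (TapeSymbol k)} {n j T : ℕ}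

/-- Removes the mark from a letter; this is the effect of the state `restore` on a cell. -/
def TapeSymbol.unmark : TapeSymbol k → TapeSymbol k
  | marked d => letter d
  | a => a

theorem unmark_comp_letter : unmark ∘ letter (k := k) = letter := rfl

theorem reaches_restore (b : Bool) (hr : blank ∉ r) :
    rightCfg (restore b) l r ⟶* rightCfg (restore b) ((r.map unmark).reverse ++ l) [] := by
  induction r generalizing l with
  | nil => exact .refl
  | cons a r ih =>
    rw [List.mem_cons, not_or] at hr
    have hrest : rightCfg (restore b) (a.unmark :: l) r ⟶*
        rightCfg (restore b) (((a :: r).map unmark).reverse ++ l) [] := by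
      simpa using ih (l := a.unmark :: l) hr.2
    cases a with
    | blank => exact absurd rfl hr.1
    | letter d => exact .head (step_goRight rfl) hrest
    | marked d => exact .head (step_write rfl) (.head (step_goRight rfl) hrest)
    | sep => exact .head (step_goRight rfl) hrest

theorem reaches_rewind (hl : blank ∉ l) (hr : blank ∉ r) :
    leftCfg rewind l r ⟶* rightCfg (restore false) ((r.reverse ++ l).map unmark) [] := by
  have hsweep : ∀ a ∈ l, machine rewind a = goLeft rewind := by
    rintro (_ | _ | _ | _) ha
    exacts [absurd ha hl, rfl, rfl, rfl]
  have hleft := reaches_sweepLeft (l' := []) (r := r) hsweep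
  rw [List.append_nil] at hleft
  refine reaches_trans hleft (reaches_of_step (step_goRight_leftEnd rfl) ?_)
  simpa using reaches_restore (l := []) (r := l.reverse ++ r) false (by simp [hl, hr])

/-! ### The subword test -/

/-- A word on the tape during the subword test, split into the initial segment of its letters that
have been matched and the rest. -/
structure MarkedWord (k : ℕ) where
  matched : List (Fin (k + 1))
  rest : List (Fin (k + 1))

namespace MarkedWord

/-- The underlying word. -/
def word (p : MarkedWord k) : List (Fin (k + 1)) := p.matched ++ p.rest

/-- The tape segment of a marked word, read from right to left. -/
def encode (p : MarkedWord k) : List (TapeSymbol k) :=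
  p.matched.map marked ++ p.rest.map letter ++ [sep]

/-- The marked word after its next unmatched letter has been compared with `o`. -/
def advance (o : Option (Fin (k + 1))) : MarkedWord k → MarkedWord k
  | ⟨u, []⟩ => ⟨u, []⟩
  | ⟨u, d :: v⟩ => if o = some d then ⟨u ++ [d], v⟩ else ⟨u, d :: v⟩

theorem word_advance (p : MarkedWord k) : (p.advance o).word = p.word := by
  obtain ⟨u, _ | ⟨d, v⟩⟩ := p
  · rfl
  · by_cases ho : o = some d <;> simp [advance, word, ho]

theorem word_comp_advance : word ∘ advance o = word := funext word_advance

theorem word_mk_nil : word ⟨[], w⟩ = w := rfl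

theorem word_comp_mk_nil : word ∘ MarkedWord.mk (k := k) [] = id := rfl

theorem rest_advance_of_rest_eq_cons {p : MarkedWord k} {d : Fin (k + 1)} (hp : p.rest = d :: v) :
    (p.advance (some d)).rest = v := by
  obtain ⟨u, _⟩ := p
  subst hp
  simp [advance]

theorem rest_advance_sublist {p : MarkedWord k} {d : Fin (k + 1)} (hp : p.rest ≠ []) :
    (p.advance (some d)).rest.Sublist v ↔ p.rest.Sublist (d :: v) := by
  obtain ⟨u, _ | ⟨e, w⟩⟩ := p
  · exact absurd rfl hp
  · by_cases hde : d = e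
    · simp [advance, hde]
    · simp [advance, hde, List.sublist_cons_iff, Ne.symm hde]

end MarkedWord

open MarkedWord

variable {p : MarkedWord k} {I : List (MarkedWord k)}

/-- The tape segment of a stack of unmarked words, read from right to left. -/
def encodeStack (s : List (List (Fin (k + 1)))) : List (TapeSymbol k) :=
  s.flatMap fun w => w.map letter ++ [sep]

theorem encodeStack_cons : encodeStack (w :: s) = w.map letter ++ sep :: encodeStack s := by
  simp [encodeStack]

theorem blank_notMem_flatMap_encode : blank ∉ I.flatMap encode := by
  simp [encode]

theorem map_unmark_encode : p.encode.map unmark = p.word.map letter ++ [sep] := by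
  simp [encode, word, unmark, Function.comp_def]

theorem map_unmark_flatMap_encode :
    (I.flatMap encode).map unmark = encodeStack (I.map word) := by
  simp only [encodeStack, List.map_flatMap, List.flatMap_map, map_unmark_encode]

theorem encodeStack_eq_flatMap_encode :
    encodeStack s = (s.map (MarkedWord.mk [])).flatMap encode := by
  simp [encodeStack, List.flatMap_map, encode]

theorem reaches_skip :
    leftCfg (skip o) (w.map letter ++ sep :: l) r ⟶*
      leftCfg (seek o) l (sep :: ((w.map letter).reverse ++ r)) :=
  (reaches_sweepLeft (by simp [machine])).tail (step_goLeft rfl)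

theorem reaches_seek_matched (u : List (Fin (k + 1))) :
    leftCfg (seek o) (u.map marked ++ l) r ⟶* leftCfg (seek o) l ((u.map marked).reverse ++ r) :=
  reaches_sweepLeft (by simp [machine])

theorem reaches_seek_word (hp : p.rest ≠ []) :
    leftCfg (seek o) (p.encode ++ l) r ⟶*
      leftCfg (seek o) l ((p.advance o).encode.reverse ++ r) := by
  obtain ⟨u, _ | ⟨d, v⟩⟩ := p
  · exact absurd rfl hp
  simp only [encode, List.append_assoc]
  refine reaches_trans (reaches_seek_matched u) ?_
  by_cases ho : o = some d
  · refine reaches_of_step (step_write (if_pos ho)) (reaches_of_step (step_goLeft rfl) ?_)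
    simpa [advance, ho, encode] using
      reaches_skip (o := o) (w := v) (l := l) (r := marked d :: ((u.map marked).reverse ++ r))
  · refine reaches_of_step (step_goLeft (if_neg ho)) ?_
    simpa [advance, ho, encode] using
      reaches_skip (o := o) (w := v) (l := l) (r := letter d :: ((u.map marked).reverse ++ r))

/-- The state in which a sweep that has met no completely matched word ends. -/
def sweepExit : Option (Fin (k + 1)) → State k
  | none => restore true
  | some _ => addTick

theorem reaches_sweepExit (hI : ∀ p ∈ I, p.rest ≠ []) :
    leftCfg (seek o) (I.flatMap encode) r ⟶*
      rightCfg (sweepExit o) [] (((I.map (advance o)).flatMap encode).reverse ++ r) := by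
  induction I generalizing r with
  | nil => cases o <;> exact .single (step_goRight_leftEnd rfl)
  | cons p I ih =>
    rw [List.forall_mem_cons] at hI
    rw [List.flatMap_cons]
    refine reaches_trans (reaches_seek_word hI.1) ?_
    simpa using ih hI.2

theorem reaches_restore_false_of_rest_eq_nil (hI : ∃ p ∈ I, p.rest = []) (hr : blank ∉ r) :
    leftCfg (seek o) (I.flatMap encode) r ⟶*
      rightCfg (restore false) ((r.reverse ++ I.flatMap encode).map unmark) [] := by
  induction I generalizing r with
  | nil => simp at hI
  | cons p I ih =>
    by_cases hp : p.rest = []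
    · simp only [List.flatMap_cons, encode, hp, List.map_nil, List.append_nil, List.append_assoc]
      refine reaches_trans (reaches_seek_matched p.matched) (reaches_of_step (step_goLeft rfl) ?_)
      simpa using reaches_rewind (l := I.flatMap encode)
        (r := sep :: ((p.matched.map marked).reverse ++ r)) blank_notMem_flatMap_encode
        (by simp [hr])
    · have hI' : ∃ p ∈ I, p.rest = [] := by simpa [hp] using hI
      rw [List.flatMap_cons]
      refine reaches_trans (reaches_seek_word hp) ?_
      simpa [map_unmark_encode, word_advance] using
        ih (r := (p.advance o).encode.reverse ++ r) hI' (by simp [encode, hr])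

/-- The configuration in which the word on top of the stack `s` is about to be tested against the
words below it. -/
def testCfg (s : List (List (Fin (k + 1)))) : TM0.Cfg (TapeSymbol k) (State k) :=
  rightCfg (restore true) (encodeStack s) []

/-- The configuration after a failed test, with the ticks still on top of the stack `s`. -/
def rejectCfg (s : List (List (Fin (k + 1)))) : TM0.Cfg (TapeSymbol k) (State k) :=
  rightCfg (restore false) (encodeStack s) []

/-- The configuration in which the word on top of the stack `s` is about to be replaced by its
predecessor. -/
def nextCfg (s : List (List (Fin (k + 1)))) : TM0.Cfg (TapeSymbol k) (State k) :=
  leftCfg findSep (encodeStack s) []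

/-- The configuration at the start of a round of the subword test on the stack `I`, `n` being the
number of the round. -/
def matchCfg (I : List (MarkedWord k)) (n : ℕ) : TM0.Cfg (TapeSymbol k) (State k) :=
  leftCfg fetch (I.flatMap encode) (sep :: List.replicate n (letter (Fin.last k)))

theorem reaches_addTick_rightEnd (hr : blank ∉ r) :
    rightCfg addTick l r ⟶* rightCfg addTick (r.reverse ++ l) [] := by
  have hsweep : ∀ a ∈ r, machine addTick a = goRight addTick := by
    rintro (_ | _ | _ | _) ha
    exacts [absurd ha hr, rfl, rfl, rfl]
  simpa using reaches_sweepRight (l := l) (r' := []) hsweep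

theorem reaches_fetch_of_addTick :
    rightCfg addTick (List.replicate n (letter (Fin.last k)) ++ sep :: l) [] ⟶*
      leftCfg fetch l (sep :: List.replicate (n + 1) (letter (Fin.last k))) := by
  have hsweep := reaches_sweepLeft (l := List.replicate (n + 1) (letter (Fin.last k)))
    (l' := sep :: l) (r := []) (M := machine) (q := passTicks) (by simp [machine])
  rw [List.reverse_replicate, List.append_nil] at hsweep
  exact reaches_of_step (step_write_rightEnd rfl) (hsweep.tail (step_goLeft rfl))

theorem reaches_matchCfg_of_testCfg : testCfg s ⟶⁺ matchCfg (s.map (MarkedWord.mk [])) 1 := by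
  refine .head' (step_write_rightEnd rfl) (reaches_of_step (step_goRight rfl) ?_)
  rw [encodeStack_eq_flatMap_encode]
  exact reaches_fetch_of_addTick (n := 0)

theorem reaches_fetch :
    leftCfg fetch (p.encode ++ l) r ⟶*
      leftCfg (seek p.rest.head?) l ((p.advance p.rest.head?).encode.reverse ++ r) := by
  have hsweep (u : List (Fin (k + 1))) (l' : List (TapeSymbol k)) :
      leftCfg fetch (u.map marked ++ l') r ⟶* leftCfg fetch l' ((u.map marked).reverse ++ r) :=
    reaches_sweepLeft (by simp [machine])
  obtain ⟨u, _ | ⟨d, v⟩⟩ := p <;> simp only [encode, List.append_assoc] <;>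
    refine reaches_trans (hsweep u _) ?_
  · simpa [advance, encode] using .single (step_goLeft rfl)
  · refine reaches_of_step (step_write rfl) (reaches_of_step (step_goLeft rfl) ?_)
    simpa [advance, encode] using
      reaches_skip (o := some d) (w := v) (l := l) (r := marked d :: ((u.map marked).reverse ++ r))

theorem reaches_matchCfg_succ {d : Fin (k + 1)} (hp : p.rest = d :: v) (hI : ∀ q ∈ I, q.rest ≠ []) :
    matchCfg (p :: I) n ⟶* matchCfg ((p :: I).map (advance (some d))) (n + 1) := by
  have hfetch := reaches_fetch (p := p) (l := I.flatMap encode)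
    (r := sep :: List.replicate n (letter (Fin.last k)))
  rw [hp, List.head?_cons] at hfetch
  refine reaches_trans hfetch (reaches_trans (reaches_sweepExit hI) ?_)
  refine reaches_trans (reaches_addTick_rightEnd (by simp [encode])) ?_
  simpa [matchCfg] using reaches_fetch_of_addTick (n := n)
    (l := (p.advance (some d)).encode ++ (I.map (advance (some d))).flatMap encode)

theorem reaches_testCfg_of_rest_eq_nil (hp : p.rest = []) (hI : ∀ q ∈ I, q.rest ≠ []) :
    matchCfg (p :: I) n ⟶* testCfg (List.replicate n (Fin.last k) :: (p :: I).map word) := by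
  have hfetch := reaches_fetch (p := p) (l := I.flatMap encode)
    (r := sep :: List.replicate n (letter (Fin.last k)))
  rw [hp, List.head?_nil] at hfetch
  refine reaches_trans hfetch (reaches_trans (reaches_sweepExit hI) ?_)
  refine reaches_trans (reaches_restore true (by simp [encode])) ?_
  simpa [testCfg, encodeStack_cons, map_unmark_encode, map_unmark_flatMap_encode,
    word_advance, word_comp_advance, unmark] using .refl

theorem reaches_rejectCfg_of_rest_eq_nil (hI : ∃ q ∈ I, q.rest = []) :
    matchCfg (p :: I) n ⟶* rejectCfg (List.replicate n (Fin.last k) :: (p :: I).map word) := by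
  refine reaches_trans reaches_fetch ?_
  refine reaches_trans (reaches_restore_false_of_rest_eq_nil hI (by simp [encode])) ?_
  simpa [rejectCfg, encodeStack_cons, map_unmark_encode, map_unmark_flatMap_encode,
    word_advance, unmark] using .refl

theorem reaches_testCfg_of_matchCfg (hI : ∀ q ∈ I, ¬ q.rest.Sublist p.rest) :
    matchCfg (p :: I) n ⟶*
      testCfg (List.replicate (n + p.rest.length) (Fin.last k) :: (p :: I).map word) := by
  have hrest : ∀ q ∈ I, q.rest ≠ [] := fun q hq h => hI q hq (h ▸ List.nil_sublist _)
  induction hv : p.rest generalizing p I n with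
  | nil => exact reaches_testCfg_of_rest_eq_nil hv hrest
  | cons d v ih =>
    have hp : (p.advance (some d)).rest = v := rest_advance_of_rest_eq_cons hv
    have hI' : ∀ q ∈ I.map (advance (some d)), ¬ q.rest.Sublist (p.advance (some d)).rest := by
      simp only [List.forall_mem_map, hp]
      exact fun q hq h => hI q hq (hv ▸ (rest_advance_sublist (hrest q hq)).1 h)
    have hrest' := fun q hq (h : MarkedWord.rest q = []) => hI' q hq (h ▸ List.nil_sublist _)
    refine reaches_trans (reaches_matchCfg_succ hv hrest) ?_
    have hmatch := ih (n := n + 1) hI' hrest' hp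
    rwa [← List.map_cons, List.map_map, word_comp_advance, Nat.add_right_comm,
      Nat.add_assoc n] at hmatch

theorem exists_reaches_rejectCfg_of_matchCfg (hI : ∃ q ∈ I, q.rest.Sublist p.rest) :
    ∃ m, matchCfg (p :: I) n ⟶* rejectCfg (List.replicate m (Fin.last k) :: (p :: I).map word) := by
  induction hv : p.rest generalizing p I n with
  | nil => exact ⟨n, reaches_rejectCfg_of_rest_eq_nil (by simpa [hv] using hI)⟩
  | cons d v ih =>
    by_cases hnil : ∃ q ∈ I, q.rest = []
    · exact ⟨n, reaches_rejectCfg_of_rest_eq_nil hnil⟩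
    have hrest : ∀ q ∈ I, q.rest ≠ [] := by simpa using hnil
    have hp : (p.advance (some d)).rest = v := rest_advance_of_rest_eq_cons hv
    have hI' : ∃ q ∈ I.map (advance (some d)), q.rest.Sublist (p.advance (some d)).rest := by
      obtain ⟨q, hq, h⟩ := hI
      exact ⟨_, List.mem_map_of_mem hq, hp ▸ (rest_advance_sublist (hrest q hq)).2 (hv ▸ h)⟩
    obtain ⟨m, hm⟩ := ih (n := n + 1) hI' hp
    rw [← List.map_cons, List.map_map, word_comp_advance] at hm
    exact ⟨m, reaches_trans (reaches_matchCfg_succ hv hrest) hm⟩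

theorem reaches_erase :
    leftCfg erase (w.map letter ++ sep :: l) [] ⟶* leftCfg findSep l [] := by
  induction w with
  | nil => exact .head (step_write rfl) (.single (step_goLeft_of_default rfl))
  | cons d w ih => exact .head (step_write rfl) (.head (step_goLeft_of_default rfl) ih)

theorem reaches_testCfg_of_forall_not_sublist (hs : ∀ x ∈ s, ¬ x.Sublist w) :
    matchCfg ((w :: s).map (MarkedWord.mk [])) 1 ⟶⁺
      testCfg (List.replicate (w.length + 1) (Fin.last k) :: w :: s) := by
  have haccept := reaches_testCfg_of_matchCfg (p := ⟨[], w⟩) (I := s.map (MarkedWord.mk []))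
    (n := 1) (by simpa using hs)
  simp only [List.map_cons, List.map_map, word_mk_nil, word_comp_mk_nil, List.map_id,
    Nat.add_comm 1] at haccept
  exact (Relation.reflTransGen_iff_eq_or_transGen.1 haccept).resolve_left fun heq =>
    nomatch (congrArg TM0.Cfg.q heq : restore true = fetch)

theorem reaches_nextCfg_of_exists_sublist (hs : ∃ x ∈ s, x.Sublist w) :
    testCfg (w :: s) ⟶* nextCfg (w :: s) := by
  obtain ⟨m, hreject⟩ := exists_reaches_rejectCfg_of_matchCfg (p := ⟨[], w⟩)
    (I := s.map (MarkedWord.mk [])) (n := 1) (by simpa using hs)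
  simp only [List.map_cons, List.map_map, word_mk_nil, word_comp_mk_nil, List.map_id] at hreject
  refine reaches_trans reaches_matchCfg_of_testCfg.to_reflTransGen (reaches_trans hreject ?_)
  rw [rejectCfg, encodeStack_cons]
  exact reaches_of_step (step_goLeft_rightEnd rfl) reaches_erase

/-! ### Predecessors of words -/

theorem reaches_decrement_zero {t : List (Fin (k + 1))}
    (ht : Nat.ofDigits (k + 1) (t.map Fin.val) = 0) :
    rightCfg decrement l (t.map letter) ⟶*
      leftCfg erase (List.replicate t.length (letter (Fin.last k)) ++ l) [] := by
  induction t generalizing l with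
  | nil => exact .single (step_goLeft_rightEnd rfl)
  | cons d t ih =>
    simp only [List.map_cons, Nat.ofDigits_cons, Nat.add_eq_zero_iff, mul_eq_zero,
      Nat.succ_ne_zero, false_or, Fin.val_eq_zero_iff] at ht
    refine reaches_of_step (step_write (if_pos ht.1)) (reaches_of_step (step_goRight rfl) ?_)
    simpa [List.replicate_succ'] using ih (l := letter (Fin.last k) :: l) ht.2

theorem exists_reaches_decrement_succ {t : List (Fin (k + 1))} {m : ℕ}
    (ht : Nat.ofDigits (k + 1) (t.map Fin.val) = m + 1) :
    ∃ t' : List (Fin (k + 1)), t'.length = t.length ∧ Nat.ofDigits (k + 1) (t'.map Fin.val) = m ∧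
      rightCfg decrement l (t.map letter) ⟶*
        rightCfg (restore true) ((t'.map letter).reverse ++ l) [] := by
  induction t generalizing l m with
  | nil => simp at ht
  | cons d t ih =>
    simp only [List.map_cons, Nat.ofDigits_cons] at ht
    by_cases hd : d = 0
    · obtain ⟨a, ha⟩ : ∃ a, Nat.ofDigits (k + 1) (t.map Fin.val) = a + 1 :=
        Nat.exists_eq_succ_of_ne_zero fun h => by simp [h, hd] at ht
      obtain ⟨t', hlength, ht', hreach⟩ := ih (l := letter (Fin.last k) :: l) ha
      refine ⟨Fin.last k :: t', by simp [hlength], ?_, ?_⟩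
      · simp only [List.map_cons, Nat.ofDigits_cons, Fin.val_last, ht']
        rw [hd, Fin.val_zero, ha] at ht
        linarith
      · refine reaches_of_step (step_write (if_pos hd)) (reaches_of_step (step_goRight rfl) ?_)
        simpa using hreach
    · have hval : (d - 1).val = d.val - 1 := Fin.val_sub_one_of_ne_zero hd
      have hpos : 0 < d.val := Fin.pos_iff_ne_zero.2 hd
      refine ⟨(d - 1) :: t, rfl, ?_, ?_⟩
      · simp only [List.map_cons, Nat.ofDigits_cons, hval]
        grind
      · refine reaches_of_step (step_write (if_neg hd)) ?_
        have hrestore := reaches_restore (l := l) (r := ((d - 1) :: t).map letter) true (by simp)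
        rwa [List.map_map, unmark_comp_letter] at hrestore

theorem reaches_decrement_of_nextCfg :
    nextCfg (w :: s) ⟶* rightCfg decrement (sep :: encodeStack s) (w.reverse.map letter) := by
  rw [nextCfg, encodeStack_cons, List.map_reverse, ← List.append_nil (w.map letter).reverse]
  exact (reaches_sweepLeft (by simp [machine])).tail (step_goRight rfl)

theorem reaches_nextCfg_of_wordRank_eq_zero (hw : wordRank w = 0) :
    nextCfg (w :: s) ⟶* nextCfg s := by
  refine reaches_trans reaches_decrement_of_nextCfg (reaches_trans (reaches_decrement_zero hw) ?_)
  rw [← List.map_replicate]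
  exact reaches_erase

theorem exists_reaches_testCfg_of_wordRank_eq_succ {m : ℕ} (hw : wordRank w = m + 1) :
    ∃ w' : List (Fin (k + 1)), w'.length = w.length ∧ wordRank w' = m ∧
      nextCfg (w :: s) ⟶* testCfg (w' :: s) := by
  obtain ⟨t, hlength, ht, hreach⟩ := exists_reaches_decrement_succ (l := sep :: encodeStack s) hw
  refine ⟨t.reverse, by simpa using hlength, by rwa [wordRank, List.reverse_reverse], ?_⟩
  rw [testCfg, encodeStack_cons, List.map_reverse]
  exact reaches_trans reaches_decrement_of_nextCfg hreach

/-! ### The depth-first search -/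

theorem reaches_testCfg_of_init :
    TM0.init [] ⟶⁺ testCfg [List.replicate 2 (Fin.last k)] := by
  have hfirst : TM0.init [] ⟶⁺ rightCfg firstLetter [sep (k := k)] [] :=
    .tail (.single (step_write_rightEnd rfl)) (step_goRight rfl)
  have hsecond : rightCfg firstLetter [sep] [] ⟶⁺
      rightCfg secondLetter [letter (Fin.last k), sep] [] :=
    .tail (.single (step_write_rightEnd rfl)) (step_goRight rfl)
  have htest : rightCfg secondLetter [letter (Fin.last k), sep] [] ⟶⁺
      testCfg [List.replicate 2 (Fin.last k)] :=
    .tail (.single (step_write_rightEnd rfl)) (step_goRight rfl)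
  exact (hfirst.trans hsecond).trans htest

theorem reaches_nextCfg_tail_of_forall
    (hs : ∀ w, Reaches (TM0.step machine) (testCfg (w :: s)) (nextCfg (w :: s))) :
    testCfg (w :: s) ⟶* nextCfg s := by
  induction hw : wordRank w generalizing w with
  | zero => exact reaches_trans (hs w) (reaches_nextCfg_of_wordRank_eq_zero hw)
  | succ m ih =>
    obtain ⟨w', -, hw', hnext⟩ := exists_reaches_testCfg_of_wordRank_eq_succ (s := s) hw
    exact reaches_trans (hs w) (reaches_trans hnext (ih hw'))

theorem reaches_nextCfg : testCfg (w :: s) ⟶* nextCfg (w :: s) := by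
  refine wellFounded_isBadExtension.induction
    (C := fun s => ∀ w, testCfg (w :: s) ⟶* nextCfg (w :: s)) s (fun s ih w => ?_) w
  by_cases hs : ∃ x ∈ s, x.Sublist w
  · exact reaches_nextCfg_of_exists_sublist hs
  · have hbad : ∀ x ∈ s, ¬ x.Sublist w := by simpa using hs
    have haccept := reaches_matchCfg_of_testCfg.trans (reaches_testCfg_of_forall_not_sublist hbad)
    exact reaches_trans haccept.to_reflTransGen
      (reaches_nextCfg_tail_of_forall (ih _ ⟨w, rfl, hbad⟩))

theorem reaches_testCfg_of_wordRank_le (hlength : v.length = w.length)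
    (hrank : wordRank v ≤ wordRank w) : testCfg (w :: s) ⟶* testCfg (v :: s) := by
  induction hw : wordRank w generalizing w with
  | zero =>
    rw [wordRank_injective_of_length_eq hlength (by omega)]
    exact .refl
  | succ m ih =>
    obtain heq | hlt := hrank.eq_or_lt
    · rw [wordRank_injective_of_length_eq hlength heq]
      exact .refl
    · obtain ⟨w', hw'length, hw', hnext⟩ := exists_reaches_testCfg_of_wordRank_eq_succ (s := s) hw
      exact reaches_trans reaches_nextCfg
        (reaches_trans hnext (ih (hlength.trans hw'length.symm) (by omega) hw'))

theorem reaches_testCfg_of_replicate_last (hlength : w.length = n) :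
    testCfg (List.replicate n (Fin.last k) :: s) ⟶* testCfg (w :: s) := by
  subst hlength
  exact reaches_testCfg_of_wordRank_le (by simp) wordRank_le_wordRank_replicate_last

theorem exists_haltsIn : ∃ T, HaltsIn (machine (k := k)) T :=
  exists_haltsFromIn_of_reaches
    (reaches_trans reaches_testCfg_of_init.to_reflTransGen
      (reaches_nextCfg_tail_of_forall fun _ => reaches_nextCfg))
    (step_leftEnd_eq_none rfl)

theorem exists_haltsFromIn_blockStack {s : List (Fin (k + 1))} (hs : SatisfiesStar s)
    (hT : HaltsIn (machine (k := k)) T) (hj : 2 * j ≤ s.length) :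
    ∃ T', T' + 2 * j < T ∧
      HaltsFromIn machine (testCfg (List.replicate (j + 2) (Fin.last k) :: blockStack s j)) T' := by
  induction j with
  | zero => simpa [blockStack] using hT.of_reaches₁ reaches_testCfg_of_init
  | succ j ih =>
    obtain ⟨T₀, hT₀T, hT₀⟩ := ih (by omega)
    have hlength : (friedmanBlock s (j + 1)).length = j + 2 := length_friedmanBlock_succ hj
    have haccept := reaches_testCfg_of_forall_not_sublist fun _ =>
      hs.not_sublist_of_mem_blockStack hj
    obtain ⟨T₁, hT₁₀, hT₁⟩ := hT₀.of_reaches (reaches_testCfg_of_replicate_last hlength)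
    obtain ⟨T₂, hT₂₁, hT₂⟩ := hT₁.of_reaches₁ reaches_matchCfg_of_testCfg
    obtain ⟨T₃, hT₃₂, hT₃⟩ := hT₂.of_reaches₁ haccept
    rw [hlength, ← blockStack_succ] at hT₃
    exact ⟨T₃, by omega, hT₃⟩

theorem length_lt_of_satisfiesStar {s : List (Fin (k + 1))} (hs : SatisfiesStar s)
    (hT : HaltsIn (machine (k := k)) T) : s.length < T := by
  obtain ⟨T₀, hT₀T, hT₀⟩ := exists_haltsFromIn_blockStack hs hT (Nat.mul_div_le s.length 2)
  obtain ⟨T₁, hT₁₀, -⟩ := hT₀.of_reaches₁ reaches_matchCfg_of_testCfg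
  omega

theorem friedmanN_lt_of_haltsIn (hT : HaltsIn (machine (k := k)) T) : friedmanN (k + 1) < T := by
  have hlt : ∀ n ∈ {n | ∃ s : List (Fin (k + 1)), s.length = n ∧ SatisfiesStar s}, n < T := by
    rintro _ ⟨s, rfl, hs⟩
    exact length_lt_of_satisfiesStar hs hT
  have hnonempty : {n | ∃ s : List (Fin (k + 1)), s.length = n ∧ SatisfiesStar s}.Nonempty :=
    ⟨0, [], rfl, fun i j hi hij hj => absurd hj (by simp; omega)⟩
  exact hlt _ (Nat.sSup_mem hnonempty ⟨T, fun n hn => (hlt n hn).le⟩)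

end FriedmanSearch

open FriedmanSearch in
theorem tm_44_8_exceeds_n3_general {Γ Λ : Type} [Inhabited Γ] [Inhabited Λ] [Fintype Γ] [Fintype Λ]
    {k : ℕ} (hk : 1 ≤ k) (hΓ : 2 * k + 2 ≤ Fintype.card Γ) (hΛ : 2 * k + 16 ≤ Fintype.card Λ) :
    ∃ (M : TM0.Machine Γ Λ) (T : ℕ), HaltsIn M T ∧ friedmanN k < T := by
  obtain ⟨k, rfl⟩ := Nat.exists_eq_add_of_le' hk
  obtain ⟨T, hT⟩ := exists_haltsIn (k := k)
  obtain ⟨M, hM⟩ := hT.exists_of_card_le (card_tapeSymbol.trans_le hΓ) (card_state.trans_le hΛ)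
  exact ⟨M, T, hM, friedmanN_lt_of_haltsIn hT⟩

/-- There is a Turing machine with 44 states and 8 tape symbols which halts on
the blank tape after more than n(3) steps. -/
theorem tm_44_8_exceeds_n3 :
    ∃ (M : Turing.TM0.Machine (Fin 8) (Fin 44)) (T : ℕ),
      HaltsIn M T ∧ friedmanN 3 < T :=
  tm_44_8_exceeds_n3_general (by norm_num) (by simp) (by simp)
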